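/- Let p ∈ [1,∞) and let μ, ν be probability measures on ℝ with finite p-th moments, with distribution functions F and G respectively. Let π* be the pushforward of Lebesgue measure on (0,1) under the map u ↦ (F⁻¹(u), G⁻¹(u)). Then π* is a coupling of μ and ν, and for every coupling π of μ and ν one has ∫_{ℝ×ℝ} |x−y|^p dπ*(x,y) ≤ ∫_{ℝ×ℝ} |x−y|^p dπ(x,y); that is, π* is an optimal coupling for the p-Wasserstein distance. -/

import Mathlib

/-!
Both quantile functions are monotone, so they never move in opposite directions. Hence, for a lower
set `L` and an upper set `U`, the events `F⁻¹ ∈ L` and `G⁻¹ ∈ U` are disjoint as soon as they fail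
to cover `(0, 1)`, and inclusion–exclusion gives the comonotone coupling the least mass on `L × U`,
namely `(μ L + ν U - 1)₊`, among all couplings.

It remains to write the cost as a mixture of indicators of such rectangles. If the convex function
`h` is minimal at `m`, then `h r - h m` is the sum of `h (max r m) - h m = ∫ t < r, φ t` with `φ`
monotone and nonnegative (the right derivative of `h`, cut off at `m`) and of the mirror image of
such a term. For `r = x - y` the substitution `t = s - y` turns this integral into
`∫ s < x, φ (s - y)`, and the layer-cake formula decomposes the antitone function `y ↦ φ (s - y)`
into indicators of lower sets. A convex function bounded below is a uniform limit of convex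
functions `max h c` attaining their minimum.
-/

open MeasureTheory ENNReal Set

/-- Generalized inverse (quantile function) of a distribution function `F`. -/
noncomputable def qinv (F : ℝ → ℝ) (u : ℝ) : ℝ := sInf {x : ℝ | u ≤ F x}

/-- `π` is a coupling of `μ` and `ν`. -/
def IsCoupling {α : Type*} [MeasurableSpace α] (π : MeasureTheory.Measure (α × α))
    (μ ν : MeasureTheory.Measure α) : Prop :=
  π.map Prod.fst = μ ∧ π.map Prod.snd = ν

open ProbabilityTheory Filter Topology

lemma map_swap_prod {α β : Type*} [MeasurableSpace α] [MeasurableSpace β] (π : Measure (α × β))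
    (B : Set β) (A : Set α) : π.map Prod.swap (B ×ˢ A) = π (A ×ˢ B) := by
  rw [← preimage_swap_prod]
  exact MeasurableEquiv.prodComm.map_apply _

namespace IsCoupling

variable {α : Type*} [MeasurableSpace α] {μ ν : Measure α} {π : Measure (α × α)}

lemma apply_fst_preimage (h : IsCoupling π μ ν) {A : Set α} (hA : MeasurableSet A) :
    π (Prod.fst ⁻¹' A) = μ A := by
  rw [← h.1, Measure.map_apply measurable_fst hA]

lemma apply_snd_preimage (h : IsCoupling π μ ν) {B : Set α} (hB : MeasurableSet B) :
    π (Prod.snd ⁻¹' B) = ν B := by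
  rw [← h.2, Measure.map_apply measurable_snd hB]

lemma swap (h : IsCoupling π μ ν) : IsCoupling (π.map Prod.swap) ν μ := by
  refine ⟨?_, ?_⟩
  · rw [Measure.map_map measurable_fst measurable_swap]
    exact h.2
  · rw [Measure.map_map measurable_snd measurable_swap]
    exact h.1

lemma isFiniteMeasure [IsFiniteMeasure μ] (h : IsCoupling π μ ν) : IsFiniteMeasure π :=
  ⟨by simpa only [← h.apply_fst_preimage .univ, preimage_univ] using measure_lt_top μ univ⟩

end IsCoupling

lemma isCoupling_map_prodMk {Ω α : Type*} [MeasurableSpace Ω] [MeasurableSpace α] {P : Measure Ω}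
    {X Y : Ω → α} (hX : AEMeasurable X P) (hY : AEMeasurable Y P) :
    IsCoupling (P.map fun ω => (X ω, Y ω)) (P.map X) (P.map Y) :=
  ⟨AEMeasurable.map_map_of_aemeasurable measurable_fst.aemeasurable (hX.prodMk hY),
    AEMeasurable.map_map_of_aemeasurable measurable_snd.aemeasurable (hX.prodMk hY)⟩

/-- The concordance order between measures on a square: `π₀` puts no more mass than `π` on the
discordant rectangles, which pair small values of one coordinate with large values of the other.
Both orientations are part of the definition, so that the marginals need not agree. -/
def MoreConcordant {α : Type*} [Preorder α] [MeasurableSpace α] (π₀ π : Measure (α × α)) : Prop :=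
  ∀ ⦃L U : Set α⦄, IsLowerSet L → IsUpperSet U →
    π₀ (L ×ˢ U) ≤ π (L ×ˢ U) ∧ π₀ (U ×ˢ L) ≤ π (U ×ˢ L)

section Comonotone

variable {Ω α : Type*} [MeasurableSpace Ω] {P : Measure Ω} [IsFiniteMeasure P]
  [LinearOrder α] [MeasurableSpace α] {X Y : Ω → α} {S : Set Ω} {π : Measure (α × α)}

lemma map_prodMk_prod_le_of_monovaryOn (hXY : MonovaryOn X Y S) (hS : ∀ᵐ ω ∂P, ω ∈ S)
    (hX : AEMeasurable X P) (hY : AEMeasurable Y P) (hπ : IsCoupling π (P.map X) (P.map Y))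
    {L U : Set α} (hL : IsLowerSet L) (hU : IsUpperSet U) (hLm : MeasurableSet L)
    (hUm : MeasurableSet U) :
    P.map (fun ω => (X ω, Y ω)) (L ×ˢ U) ≤ π (L ×ˢ U) := by
  rw [Measure.map_apply_of_aemeasurable (hX.prodMk hY) (hLm.prod hUm)]
  change P (X ⁻¹' L ∩ Y ⁻¹' U) ≤ π (Prod.fst ⁻¹' L ∩ Prod.snd ⁻¹' U)
  by_cases hne : ∃ ω₀ ∈ S, X ω₀ ∈ L ∧ Y ω₀ ∈ U
  · obtain ⟨ω₀, hω₀, hXL, hYU⟩ := hne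
    have hcover : P (X ⁻¹' L ∪ Y ⁻¹' U) = P univ := by
      refine measure_congr (eventuallyEq_univ.2 ?_)
      filter_upwards [hS] with ω hω
      rcases lt_or_ge (Y ω) (Y ω₀) with hlt | hge
      · exact Or.inl (hL (hXY hω hω₀ hlt) hXL)
      · exact Or.inr (hU hge hYU)
    have hmass : P univ = π univ := by
      rw [← preimage_univ (f := Prod.fst), hπ.apply_fst_preimage .univ,
        Measure.map_apply_of_aemeasurable hX .univ, preimage_univ]
    refine (ENNReal.add_le_add_iff_left (measure_ne_top P univ)).1 ?_
    calc P univ + P (X ⁻¹' L ∩ Y ⁻¹' U) = P (X ⁻¹' L) + P (Y ⁻¹' U) := by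
          rw [← hcover, measure_union_add_inter₀ _ (hY.nullMeasurable hUm)]
      _ = π (Prod.fst ⁻¹' L) + π (Prod.snd ⁻¹' U) := by
          rw [hπ.apply_fst_preimage hLm, hπ.apply_snd_preimage hUm,
            Measure.map_apply_of_aemeasurable hX hLm, Measure.map_apply_of_aemeasurable hY hUm]
      _ = π (Prod.fst ⁻¹' L ∪ Prod.snd ⁻¹' U) + π (Prod.fst ⁻¹' L ∩ Prod.snd ⁻¹' U) :=
          (measure_union_add_inter _ (measurable_snd hUm)).symm
      _ ≤ P univ + π (Prod.fst ⁻¹' L ∩ Prod.snd ⁻¹' U) := by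
          rw [hmass]
          gcongr
          exact subset_univ _
  · have hnull : P (X ⁻¹' L ∩ Y ⁻¹' U) = 0 := by
      refine measure_eq_zero_iff_ae_notMem.2 ?_
      filter_upwards [hS] with ω hω hmem using hne ⟨ω, hω, hmem⟩
    exact hnull.trans_le zero_le

lemma moreConcordant_map_prodMk_of_monovaryOn [TopologicalSpace α] [OrderTopology α]
    [SecondCountableTopology α] [BorelSpace α] (hXY : MonovaryOn X Y S) (hS : ∀ᵐ ω ∂P, ω ∈ S)
    (hX : AEMeasurable X P) (hY : AEMeasurable Y P) (hπ : IsCoupling π (P.map X) (P.map Y)) :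
    MoreConcordant (P.map fun ω => (X ω, Y ω)) π := by
  intro L U hL hU
  have hLm := hL.ordConnected.measurableSet
  have hUm := hU.ordConnected.measurableSet
  refine ⟨map_prodMk_prod_le_of_monovaryOn hXY hS hX hY hπ hL hU hLm hUm, ?_⟩
  have hswap := map_prodMk_prod_le_of_monovaryOn hXY.symm hS hY hX hπ.swap hL hU hLm hUm
  have hmap : P.map (fun ω => (Y ω, X ω)) = (P.map fun ω => (X ω, Y ω)).map Prod.swap :=
    (AEMeasurable.map_map_of_aemeasurable measurable_swap.aemeasurable (hX.prodMk hY)).symm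
  rwa [hmap, map_swap_prod, map_swap_prod] at hswap

end Comonotone

/-- The right derivative of `h : ℝ → ℝ`; it exists everywhere, and is monotone, when `h` is
convex. -/
noncomputable def rightDeriv (h : ℝ → ℝ) (t : ℝ) : ℝ := derivWithin h (Ioi t) t

section Convex

variable {h : ℝ → ℝ} {m : ℝ}

lemma continuous_of_convexOn_univ (hh : ConvexOn ℝ univ h) : Continuous h :=
  continuousOn_univ.1 (hh.continuousOn isOpen_univ)

lemma monotone_rightDeriv (hh : ConvexOn ℝ univ h) : Monotone (rightDeriv h) := by
  rw [← monotoneOn_univ, ← interior_univ]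
  exact hh.monotoneOn_rightDeriv

lemma hasDerivWithinAt_rightDeriv (hh : ConvexOn ℝ univ h) (t : ℝ) :
    HasDerivWithinAt h (rightDeriv h t) (Ioi t) t :=
  hh.hasDerivWithinAt_rightDeriv_of_mem_interior (by rw [interior_univ]; exact mem_univ t)

lemma integral_rightDeriv (hh : ConvexOn ℝ univ h) (a b : ℝ) :
    ∫ t in a..b, rightDeriv h t = h b - h a :=
  intervalIntegral.integral_eq_sub_of_hasDeriv_right
    (continuous_of_convexOn_univ hh).continuousOn
    (fun t _ => hasDerivWithinAt_rightDeriv hh t)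
    (monotone_rightDeriv hh).intervalIntegrable

lemma rightDeriv_nonneg_of_isMinOn (hh : ConvexOn ℝ univ h) (hm : IsMinOn h univ m) {t : ℝ}
    (hmt : m ≤ t) : 0 ≤ rightDeriv h t := by
  refine le_trans ?_ (monotone_rightDeriv hh hmt)
  refine ge_of_tendsto ((hasDerivWithinAt_iff_tendsto_slope' self_notMem_Ioi).1
    (hasDerivWithinAt_rightDeriv hh m)) ?_
  filter_upwards [self_mem_nhdsWithin] with s hs
  rw [slope_def_field]
  exact div_nonneg (sub_nonneg.2 (hm (mem_univ s))) (sub_nonneg.2 (le_of_lt hs))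

lemma monotone_indicator_Ioi {g : ℝ → ℝ} (hg : MonotoneOn g (Ioi m))
    (hg0 : ∀ t ∈ Ioi m, 0 ≤ g t) : Monotone ((Ioi m).indicator g) := by
  intro s t hst
  by_cases hs : s ∈ Ioi m
  · have ht : t ∈ Ioi m := hs.trans_le hst
    simpa only [indicator_of_mem hs, indicator_of_mem ht] using hg hs ht hst
  · rw [indicator_of_notMem hs]
    exact indicator_nonneg hg0 t

lemma ofReal_apply_max_sub_eq_lintegral_Iio (hh : ConvexOn ℝ univ h) (hm : IsMinOn h univ m)
    (r : ℝ) :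
    ENNReal.ofReal (h (max r m) - h m)
      = ∫⁻ t in Iio r, ENNReal.ofReal ((Ioi m).indicator (rightDeriv h) t) := by
  have hdom : ∫⁻ t in Iio r, ENNReal.ofReal ((Ioi m).indicator (rightDeriv h) t)
      = ∫⁻ t in Ioo m r, ENNReal.ofReal (rightDeriv h t) := by
    rw [← Ioi_inter_Iio, ← setLIntegral_indicator measurableSet_Ioi]
    exact congrArg (fun f => ∫⁻ t in Iio r, f t) (indicator_comp_of_zero ENNReal.ofReal_zero).symm
  rw [hdom]
  rcases le_total r m with hr | hr
  · rw [max_eq_right hr, sub_self, ENNReal.ofReal_zero, Ioo_eq_empty (not_lt.2 hr),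
      setLIntegral_empty]
  · have hint : IntegrableOn (rightDeriv h) (Ioo m r) :=
      (((monotone_rightDeriv hh).monotoneOn _).integrableOn_isCompact isCompact_Icc).mono_set
        Ioo_subset_Icc_self
    rw [max_eq_left hr, ← integral_rightDeriv hh, intervalIntegral.integral_of_le hr,
      integral_Ioc_eq_integral_Ioo, ofReal_integral_eq_lintegral_ofReal hint]
    filter_upwards [ae_restrict_mem measurableSet_Ioo] with t ht
    exact rightDeriv_nonneg_of_isMinOn hh hm ht.1.le

end Convex

/-- The substitution `t = s - y` makes the domain of integration an upper set in `x` and, when `φ`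
is monotone, the integrand antitone in `y`. -/
lemma lintegral_setLIntegral_Iio_sub (ρ : Measure (ℝ × ℝ)) [SFinite ρ] {φ : ℝ → ℝ≥0∞}
    (hφ : Measurable φ) :
    ∫⁻ z, (∫⁻ t in Iio (z.1 - z.2), φ t) ∂ρ
      = ∫⁻ s, ∫⁻ z in Prod.fst ⁻¹' Ioi s, φ (s - z.2) ∂ρ := by
  let T : Set ((ℝ × ℝ) × ℝ) := {w | w.2 < w.1.1}
  let f : (ℝ × ℝ) × ℝ → ℝ≥0∞ := T.indicator fun w => φ (w.2 - w.1.2)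
  have hf : Measurable f :=
    (hφ.comp (by fun_prop)).indicator (measurableSet_lt (by fun_prop) (by fun_prop))
  calc ∫⁻ z, (∫⁻ t in Iio (z.1 - z.2), φ t) ∂ρ
      = ∫⁻ z, (∫⁻ s, f (z, s)) ∂ρ := by
        refine lintegral_congr fun z => ?_
        rw [← lintegral_indicator measurableSet_Iio, ← lintegral_sub_right_eq_self _ z.2]
        refine lintegral_congr fun s => ?_
        simp only [f, T, indicator, mem_Iio, sub_lt_sub_iff_right, mem_ofPred_eq]
    _ = ∫⁻ s, ∫⁻ z, f (z, s) ∂ρ := lintegral_lintegral_swap hf.aemeasurable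
    _ = ∫⁻ s, ∫⁻ z in Prod.fst ⁻¹' Ioi s, φ (s - z.2) ∂ρ := by
        refine lintegral_congr fun s => ?_
        rw [← lintegral_indicator (measurable_fst measurableSet_Ioi)]
        rfl

namespace MoreConcordant

section Order

variable {α : Type*} [MeasurableSpace α]

lemma swap [Preorder α] {π₀ π : Measure (α × α)} (h : MoreConcordant π₀ π) :
    MoreConcordant (π₀.map Prod.swap) (π.map Prod.swap) := by
  intro L U hL hU
  simpa only [map_swap_prod] using (h hL hU).symm

lemma measure_univ_le [Preorder α] {π₀ π : Measure (α × α)} (h : MoreConcordant π₀ π) :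
    π₀ univ ≤ π univ := by
  simpa only [univ_prod_univ] using (h isLowerSet_univ isUpperSet_univ).1

lemma setLIntegral_antitone_le [LinearOrder α] [TopologicalSpace α] [OrderTopology α]
    [SecondCountableTopology α] [BorelSpace α] {π₀ π : Measure (α × α)} (h : MoreConcordant π₀ π)
    {U : Set α} (hU : IsUpperSet U) {k : α → ℝ} (hk : Antitone k) (hk0 : ∀ y, 0 ≤ k y) :
    ∫⁻ z in Prod.fst ⁻¹' U, ENNReal.ofReal (k z.2) ∂π₀
      ≤ ∫⁻ z in Prod.fst ⁻¹' U, ENNReal.ofReal (k z.2) ∂π := by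
  have hUm : MeasurableSet U := hU.ordConnected.measurableSet
  have hlayer (ρ : Measure (α × α)) : ∫⁻ z in Prod.fst ⁻¹' U, ENNReal.ofReal (k z.2) ∂ρ
      = ∫⁻ c in Ioi 0, ρ (U ×ˢ {y | c < k y}) := by
    rw [lintegral_eq_lintegral_meas_lt _ (.of_forall fun z : α × α => hk0 z.2)
      (hk.measurable.comp measurable_snd).aemeasurable]
    refine lintegral_congr fun c => ?_
    rw [Measure.restrict_apply' (measurable_fst hUm), inter_comm]
    rfl
  rw [hlayer, hlayer]
  exact lintegral_mono fun c => (h (fun _ _ hxy hc => lt_of_lt_of_le hc (hk hxy)) hU).2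

end Order

variable {π₀ π : Measure (ℝ × ℝ)}

lemma lintegral_Iio_sub_le [SFinite π₀] [SFinite π] (h : MoreConcordant π₀ π) {φ : ℝ → ℝ}
    (hφ : Monotone φ) (hφ0 : ∀ t, 0 ≤ φ t) :
    ∫⁻ z, (∫⁻ t in Iio (z.1 - z.2), ENNReal.ofReal (φ t)) ∂π₀
      ≤ ∫⁻ z, (∫⁻ t in Iio (z.1 - z.2), ENNReal.ofReal (φ t)) ∂π := by
  have hφm : Measurable fun t => ENNReal.ofReal (φ t) := hφ.measurable.ennreal_ofReal
  rw [lintegral_setLIntegral_Iio_sub π₀ hφm, lintegral_setLIntegral_Iio_sub π hφm]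
  exact lintegral_mono fun s => h.setLIntegral_antitone_le (isUpperSet_Ioi s)
    (fun _ _ hxy => hφ (sub_le_sub_left hxy s)) fun _ => hφ0 _

lemma lintegral_apply_max_sub_le [SFinite π₀] [SFinite π] (hπ : MoreConcordant π₀ π)
    {h : ℝ → ℝ} {m : ℝ} (hh : ConvexOn ℝ univ h) (hm : IsMinOn h univ m) :
    ∫⁻ z, ENNReal.ofReal (h (max (z.1 - z.2) m) - h m) ∂π₀
      ≤ ∫⁻ z, ENNReal.ofReal (h (max (z.1 - z.2) m) - h m) ∂π := by
  have hnonneg : ∀ t ∈ Ioi m, 0 ≤ rightDeriv h t :=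
    fun t ht => rightDeriv_nonneg_of_isMinOn hh hm (le_of_lt ht)
  simp only [ofReal_apply_max_sub_eq_lintegral_Iio hh hm]
  exact hπ.lintegral_Iio_sub_le
    (monotone_indicator_Ioi ((monotone_rightDeriv hh).monotoneOn _) hnonneg)
    (indicator_nonneg hnonneg)

lemma lintegral_convex_sub_le_of_isMinOn [SFinite π₀] [SFinite π] (hπ : MoreConcordant π₀ π)
    {h : ℝ → ℝ} {m : ℝ} (hh : ConvexOn ℝ univ h) (hm : IsMinOn h univ m) (hm0 : 0 ≤ h m) :
    ∫⁻ z, ENNReal.ofReal (h (z.1 - z.2)) ∂π₀ ≤ ∫⁻ z, ENNReal.ofReal (h (z.1 - z.2)) ∂π := by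
  have hneg : ConvexOn ℝ univ fun r => h (-r) := hh.comp_linearMap (-LinearMap.id)
  have hnegmin : IsMinOn (fun r => h (-r)) univ (-m) := fun r _ => by
    simpa only [neg_neg, mem_ofPred_eq] using hm (mem_univ (-r))
  have hcont := continuous_of_convexOn_univ hh
  have hpointwise (r : ℝ) : ENNReal.ofReal (h r) = ENNReal.ofReal (h m)
      + ENNReal.ofReal (h (max r m) - h m)
      + ENNReal.ofReal (h (-max (-r) (-m)) - h (- -m)) := by
    have hmin (r : ℝ) : 0 ≤ h r - h m := sub_nonneg.2 (hm (mem_univ r))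
    rw [max_neg_neg, neg_neg, neg_neg, ← ENNReal.ofReal_add hm0 (hmin _),
      ← ENNReal.ofReal_add (add_nonneg hm0 (hmin _)) (hmin _)]
    rcases le_total r m with hr | hr
    · rw [max_eq_right hr, min_eq_left hr]
      ring_nf
    · rw [max_eq_left hr, min_eq_right hr]
      ring_nf
  have hsplit (ρ : Measure (ℝ × ℝ)) : ∫⁻ z, ENNReal.ofReal (h (z.1 - z.2)) ∂ρ
      = ENNReal.ofReal (h m) * ρ univ
        + ∫⁻ z, ENNReal.ofReal (h (max (z.1 - z.2) m) - h m) ∂ρ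
        + ∫⁻ z, ENNReal.ofReal (h (-max (z.1 - z.2) (-m)) - h (- -m)) ∂(ρ.map Prod.swap) := by
    rw [lintegral_map (by fun_prop) measurable_swap, ← lintegral_const,
      ← lintegral_add_left (by fun_prop), ← lintegral_add_left (by fun_prop)]
    refine lintegral_congr fun z => ?_
    rw [hpointwise, neg_sub, Prod.fst_swap, Prod.snd_swap]
  rw [hsplit, hsplit]
  exact add_le_add (add_le_add (mul_le_mul_right hπ.measure_univ_le _)
    (hπ.lintegral_apply_max_sub_le hh hm)) (hπ.swap.lintegral_apply_max_sub_le hneg hnegmin)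

/-- Truncating `h` from below at a level slightly above its infimum makes it attain its minimum. -/
lemma lintegral_convex_sub_le_add [SFinite π₀] [SFinite π] (hπ : MoreConcordant π₀ π)
    {h : ℝ → ℝ} (hh : ConvexOn ℝ univ h) (hh0 : ∀ r, 0 ≤ h r) {ε : ℝ} (hε : 0 < ε) :
    ∫⁻ z, ENNReal.ofReal (h (z.1 - z.2)) ∂π₀
      ≤ ∫⁻ z, ENNReal.ofReal (h (z.1 - z.2)) ∂π + ENNReal.ofReal ε * π univ := by
  let c := (⨅ r, h r) + ε
  have hconv : ConvexOn ℝ univ fun r => max (h r) c := hh.sup (convexOn_const c convex_univ)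
  obtain ⟨m, hm⟩ : ∃ m, h m < c := exists_lt_of_ciInf_lt (lt_add_of_pos_right _ hε)
  have hmin : IsMinOn (fun r => max (h r) c) univ m := fun r _ => by
    simp only [max_eq_right hm.le, mem_ofPred_eq, le_max_right]
  have hle (r : ℝ) : max (h r) c ≤ h r + ε :=
    max_le (le_add_of_nonneg_right hε.le)
      (add_le_add_left (ciInf_le ⟨0, forall_mem_range.2 hh0⟩ r) ε)
  calc ∫⁻ z, ENNReal.ofReal (h (z.1 - z.2)) ∂π₀
      ≤ ∫⁻ z, ENNReal.ofReal (max (h (z.1 - z.2)) c) ∂π₀ := by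
        gcongr
        exact le_max_left _ _
    _ ≤ ∫⁻ z, ENNReal.ofReal (max (h (z.1 - z.2)) c) ∂π :=
        hπ.lintegral_convex_sub_le_of_isMinOn hconv hmin (le_max_of_le_left (hh0 m))
    _ ≤ ∫⁻ z, (ENNReal.ofReal (h (z.1 - z.2)) + ENNReal.ofReal ε) ∂π := by
        gcongr with z
        exact (ENNReal.ofReal_le_ofReal (hle _)).trans ENNReal.ofReal_add_le
    _ = ∫⁻ z, ENNReal.ofReal (h (z.1 - z.2)) ∂π + ENNReal.ofReal ε * π univ := by
        rw [lintegral_add_right _ measurable_const, lintegral_const]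

theorem lintegral_convex_sub_le [SFinite π₀] [IsFiniteMeasure π] (hπ : MoreConcordant π₀ π)
    {h : ℝ → ℝ} (hh : ConvexOn ℝ univ h) (hh0 : ∀ r, 0 ≤ h r) :
    ∫⁻ z, ENNReal.ofReal (h (z.1 - z.2)) ∂π₀ ≤ ∫⁻ z, ENNReal.ofReal (h (z.1 - z.2)) ∂π := by
  have herror : Tendsto (fun ε : ℝ => ENNReal.ofReal ε * π univ) (𝓝[>] 0) (𝓝 0) := by
    have := ENNReal.Tendsto.mul_const (ENNReal.continuous_ofReal.tendsto 0)
      (Or.inr (measure_ne_top π univ))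
    rw [ENNReal.ofReal_zero, zero_mul] at this
    exact this.mono_left nhdsWithin_le_nhds
  have hlim := herror.const_add (∫⁻ z, ENNReal.ofReal (h (z.1 - z.2)) ∂π)
  rw [add_zero] at hlim
  refine ge_of_tendsto hlim ?_
  filter_upwards [self_mem_nhdsWithin] with ε hε using hπ.lintegral_convex_sub_le_add hh hh0 hε

end MoreConcordant

section Quantile

variable (μ : Measure ℝ)

lemma qinv_cdf_le_iff {u : ℝ} (hu : u ∈ Ioo (0 : ℝ) 1) (x : ℝ) :
    qinv (cdf μ) u ≤ x ↔ u ≤ cdf μ x := by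
  obtain ⟨a, ha⟩ : ∃ a, u < cdf μ a :=
    ((tendsto_cdf_atTop μ).eventually (lt_mem_nhds hu.2)).exists
  obtain ⟨b, hb⟩ : ∃ b, cdf μ b < u :=
    ((tendsto_cdf_atBot μ).eventually (gt_mem_nhds hu.1)).exists
  have hbdd : BddBelow {y : ℝ | u ≤ cdf μ y} :=
    ⟨b, fun y hy => ((monotone_cdf μ).reflect_lt (hb.trans_le hy)).le⟩
  refine ⟨fun hx => ?_, fun hx => csInf_le hbdd hx⟩
  refine ge_of_tendsto (((cdf μ).right_continuous x).mono Ioi_subset_Ici_self) ?_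
  filter_upwards [self_mem_nhdsWithin] with y hy
  obtain ⟨z, hz, hzy⟩ := exists_lt_of_csInf_lt ⟨a, ha.le⟩ (lt_of_le_of_lt hx hy)
  exact le_trans hz (monotone_cdf μ hzy.le)

lemma monotoneOn_qinv_cdf : MonotoneOn (qinv (cdf μ)) (Ioo 0 1) := by
  intro u hu v hv huv
  rw [qinv_cdf_le_iff μ hu]
  exact huv.trans ((qinv_cdf_le_iff μ hv _).1 le_rfl)

lemma aemeasurable_qinv_cdf :
    AEMeasurable (qinv (cdf μ)) (volume.restrict (Ioo (0 : ℝ) 1)) :=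
  aemeasurable_restrict_of_monotoneOn measurableSet_Ioo (monotoneOn_qinv_cdf μ)

lemma map_qinv_cdf [IsProbabilityMeasure μ] :
    (volume.restrict (Ioo (0 : ℝ) 1)).map (qinv (cdf μ)) = μ := by
  refine Measure.ext_of_Iic _ _ fun x => ?_
  have hpre : qinv (cdf μ) ⁻¹' Iic x ∩ Ioo 0 1 = Ioo 0 1 ∩ Iic (cdf μ x) := by
    ext u
    rw [inter_comm]
    exact and_congr_right fun hu => qinv_cdf_le_iff μ hu x
  rw [Measure.map_apply_of_aemeasurable (aemeasurable_qinv_cdf μ) measurableSet_Iic,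
    Measure.restrict_apply' measurableSet_Ioo, hpre, ← ofReal_cdf μ x]
  calc volume (Ioo 0 1 ∩ Iic (cdf μ x)) = volume (Ioc 0 1 ∩ Iic (cdf μ x)) :=
        measure_congr (Ioo_ae_eq_Ioc.inter (ae_eq_refl _))
    _ = ENNReal.ofReal (cdf μ x) := by
        rw [Ioc_inter_Iic, min_eq_right (cdf_le_one μ x), Real.volume_Ioc, sub_zero]

end Quantile

lemma convexOn_norm_rpow {E : Type*} [SeminormedAddCommGroup E] [NormedSpace ℝ E] {p : ℝ}
    (hp : 1 ≤ p) : ConvexOn ℝ univ fun x : E => ‖x‖ ^ p := by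
  have hrange : norm '' (univ : Set E) ⊆ Ici 0 := image_subset_iff.2 fun x _ => norm_nonneg x
  have hconv : Convex ℝ (norm '' (univ : Set E)) :=
    (isPreconnected_univ.image _ continuous_norm.continuousOn).ordConnected.convex
  refine ((convexOn_rpow hp).subset hrange hconv).comp convexOn_univ_norm fun x hx y _ hxy => ?_
  exact Real.rpow_le_rpow (hrange hx) hxy (zero_le_one.trans hp)

theorem comonotone_coupling_optimal_general (h : ℝ → ℝ) (hh : ConvexOn ℝ univ h)
    (hh0 : ∀ r, 0 ≤ h r) (μ ν : Measure ℝ) [IsProbabilityMeasure μ] [IsProbabilityMeasure ν]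
    (F G : ℝ → ℝ) (hF : ∀ x, F x = (μ (Iic x)).toReal) (hG : ∀ x, G x = (ν (Iic x)).toReal)
    (πstar : Measure (ℝ × ℝ))
    (hπstar : πstar
      = Measure.map (fun u => (qinv F u, qinv G u)) (volume.restrict (Ioo (0 : ℝ) 1))) :
    IsCoupling πstar μ ν ∧
      ∀ π : Measure (ℝ × ℝ), IsCoupling π μ ν →
        ∫⁻ z, ENNReal.ofReal (h (z.1 - z.2)) ∂πstar ≤ ∫⁻ z, ENNReal.ofReal (h (z.1 - z.2)) ∂π := by
  obtain rfl : F = cdf μ := funext fun x => (hF x).trans (cdf_eq_real μ x).symm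
  obtain rfl : G = cdf ν := funext fun x => (hG x).trans (cdf_eq_real ν x).symm
  subst hπstar
  have hX := aemeasurable_qinv_cdf μ
  have hY := aemeasurable_qinv_cdf ν
  have hcoupling := isCoupling_map_prodMk hX hY
  rw [map_qinv_cdf, map_qinv_cdf] at hcoupling
  refine ⟨hcoupling, fun π hπ => ?_⟩
  have hfinite := hπ.isFiniteMeasure
  have hcomonotone : MonovaryOn (qinv (cdf μ)) (qinv (cdf ν)) (Ioo 0 1) :=
    (monotoneOn_qinv_cdf μ).monovaryOn (monotoneOn_qinv_cdf ν)
  refine MoreConcordant.lintegral_convex_sub_le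
    (moreConcordant_map_prodMk_of_monovaryOn hcomonotone
      (ae_restrict_mem measurableSet_Ioo) hX hY ?_) hh hh0
  rwa [map_qinv_cdf, map_qinv_cdf]

/-- the pushforward of Lebesgue measure on `(0,1)` under
`u ↦ (F⁻¹(u), G⁻¹(u))` is a coupling of `μ` and `ν` and is optimal for the
`p`-Wasserstein distance. -/
theorem comonotone_coupling_optimal (p : ℝ) (hp : 1 ≤ p)
    (μ ν : MeasureTheory.Measure ℝ) [IsProbabilityMeasure μ] [IsProbabilityMeasure ν]
    (hμ : ∫⁻ x, ENNReal.ofReal (|x| ^ p) ∂μ ≠ ⊤)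
    (hν : ∫⁻ x, ENNReal.ofReal (|x| ^ p) ∂ν ≠ ⊤)
    (F G : ℝ → ℝ)
    (hF : ∀ x, F x = (μ (Iic x)).toReal)
    (hG : ∀ x, G x = (ν (Iic x)).toReal)
    (πstar : MeasureTheory.Measure (ℝ × ℝ))
    (hπstar : πstar
      = MeasureTheory.Measure.map (fun u => (qinv F u, qinv G u))
          (MeasureTheory.volume.restrict (Ioo (0:ℝ) 1))) :
    IsCoupling πstar μ ν ∧
      ∀ π : MeasureTheory.Measure (ℝ × ℝ), IsCoupling π μ ν →
        ∫⁻ z, ENNReal.ofReal (|z.1 - z.2| ^ p) ∂πstar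
          ≤ ∫⁻ z, ENNReal.ofReal (|z.1 - z.2| ^ p) ∂π :=
  comonotone_coupling_optimal_general (fun r => |r| ^ p) (convexOn_norm_rpow hp)
    (fun _ => Real.rpow_nonneg (abs_nonneg _) p) μ ν F G hF hG πstar hπstar
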